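/- Let n ≥ 1 be an integer, let 0 < γ ≤ 1, let c ∈ ℝ^n be a nonzero vector with c ≥ 0, and set K = ‖c‖_∞·γ/(5n), G = {i : c_i < K}, c̃_i = 0 for i ∈ G and c̃_i = ⌊(1 + γ/2)^{⌊log_{1+γ/2}(c_i/K)⌋}⌋ for i ∉ G. Then: (1) every coordinate c̃_i belongs to the set S = {0} ∪ {⌊(1 + γ/2)^ℓ⌋ : ℓ = 0, 1, …, ⌊log_{1+γ/2}(5n/γ)⌋}; and (2) for every x ∈ ℝ^n with x ≥ 0 and c·x ≤ β, one has c̃·x ≤ β/K. -/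

import Mathlib

noncomputable section

/-- Dot product on `ℝ^n`. -/
def dot {n : ℕ} (c x : Fin n → ℝ) : ℝ := ∑ i, c i * x i

/-- The threshold `K = ‖c‖_∞ · γ / (5n)` (the norm on `Fin n → ℝ` is the sup norm). -/
def Kthr (n : ℕ) (γ : ℝ) (c : Fin n → ℝ) : ℝ := ‖c‖ * γ / (5 * n)

/-- The rounded objective `c̃`: `c̃_i = 0` when `c_i < K`, and otherwise
`c̃_i = ⌊(1 + γ/2)^{⌊log_{1+γ/2}(c_i/K)⌋}⌋`. -/
def ctil (n : ℕ) (γ : ℝ) (c : Fin n → ℝ) : Fin n → ℝ :=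
  fun i => if c i < Kthr n γ c then 0
    else ((⌊(1 + γ / 2) ^ (⌊Real.logb (1 + γ / 2) (c i / Kthr n γ c)⌋ : ℤ)⌋ : ℤ) : ℝ)

/-- The coefficient set `S = {0} ∪ {⌊(1 + γ/2)^ℓ⌋ : ℓ = 0, 1, …, ⌊log_{1+γ/2}(5n/γ)⌋}`. -/
def coefSet (n : ℕ) (γ : ℝ) : Set ℝ :=
  insert 0 {v : ℝ | ∃ ℓ : ℕ, ℓ ≤ ⌊Real.logb (1 + γ / 2) (5 * n / γ)⌋₊ ∧
    v = ((⌊(1 + γ / 2) ^ ℓ⌋ : ℤ) : ℝ)}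

/-!
Both roundings in `c̃ᵢ` only decrease `cᵢ / K`, so `c̃ ≤ c / K` coordinatewise, and pairing with
`x ≥ 0` preserves this. The exponents occurring in `c̃` are bounded because
`cᵢ / K ≤ ‖c‖ / K = 5n / γ`.
-/

theorem zpow_floor_logb_le {b t : ℝ} (hb : 1 < b) (ht : 0 < t) :
    b ^ ⌊Real.logb b t⌋ ≤ t := by
  have hb₀ : 0 < b := zero_lt_one.trans hb
  calc
    b ^ ⌊Real.logb b t⌋ = b ^ (⌊Real.logb b t⌋ : ℝ) := (Real.rpow_intCast b _).symm
    _ ≤ b ^ Real.logb b t := Real.rpow_le_rpow_of_exponent_le hb.le (Int.floor_le _)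
    _ = t := Real.rpow_logb hb₀ hb.ne' ht

theorem zpow_floor_eq_pow_natFloor {G R : Type*} [DivInvMonoid G] [Ring R] [LinearOrder R]
    [FloorRing R] (a : G) {r : R} (hr : 0 ≤ r) :
    a ^ ⌊r⌋ = a ^ ⌊r⌋₊ := by
  rw [← Int.natCast_floor_eq_floor hr, zpow_natCast]

theorem dot_eq_dotProduct {n : ℕ} (c x : Fin n → ℝ) : dot c x = c ⬝ᵥ x := rfl

section Rounding

variable {n : ℕ} {γ : ℝ} {c : Fin n → ℝ} {i : Fin n}

theorem Kthr_pos (hγ : 0 < γ) (hc : c ≠ 0) : 0 < Kthr n γ c := by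
  obtain ⟨i, -⟩ := Function.ne_iff.mp hc
  have hn : (0 : ℝ) < n := Nat.cast_pos.mpr i.pos
  unfold Kthr
  positivity

theorem norm_div_Kthr (hc : c ≠ 0) : ‖c‖ / Kthr n γ c = 5 * n / γ := by
  have hnorm : ‖c‖ ≠ 0 := norm_ne_zero_iff.mpr hc
  unfold Kthr
  field_simp

theorem div_Kthr_le (hγ : 0 < γ) (hc : c ≠ 0) (i : Fin n) :
    c i / Kthr n γ c ≤ 5 * n / γ := by
  have hK : 0 < Kthr n γ c := Kthr_pos hγ hc
  have hi : c i ≤ ‖c‖ := (Real.le_norm_self _).trans (norm_le_pi_norm c i)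
  calc
    c i / Kthr n γ c ≤ ‖c‖ / Kthr n γ c := by gcongr
    _ = 5 * n / γ := norm_div_Kthr hc

theorem ctil_of_lt (h : c i < Kthr n γ c) : ctil n γ c i = 0 := if_pos h

theorem ctil_of_le (h : Kthr n γ c ≤ c i) :
    ctil n γ c i =
      (⌊(1 + γ / 2) ^ ⌊Real.logb (1 + γ / 2) (c i / Kthr n γ c)⌋⌋ : ℝ) :=
  if_neg h.not_gt

theorem ctil_mem_coefSet (hγ : 0 < γ) (hc : c ≠ 0) (i : Fin n) :
    ctil n γ c i ∈ coefSet n γ := by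
  rcases lt_or_ge (c i) (Kthr n γ c) with hlt | hge
  · exact .inl (ctil_of_lt hlt)
  · have hb : 1 < 1 + γ / 2 := by linarith
    have hratio : 1 ≤ c i / Kthr n γ c := (one_le_div (Kthr_pos hγ hc)).mpr hge
    have hlog : Real.logb (1 + γ / 2) (c i / Kthr n γ c) ≤ Real.logb (1 + γ / 2) (5 * n / γ) :=
      Real.logb_le_logb_of_le hb (zero_lt_one.trans_le hratio) (div_Kthr_le hγ hc i)
    refine .inr ⟨_, Nat.floor_mono hlog, ?_⟩
    rw [ctil_of_le hge, zpow_floor_eq_pow_natFloor _ (Real.logb_nonneg hb hratio)]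

theorem ctil_le_div_Kthr (hγ : 0 < γ) (hc : c ≠ 0) (hi : 0 ≤ c i) :
    ctil n γ c i ≤ c i / Kthr n γ c := by
  have hK : 0 < Kthr n γ c := Kthr_pos hγ hc
  rcases lt_or_ge (c i) (Kthr n γ c) with hlt | hge
  · rw [ctil_of_lt hlt]
    exact div_nonneg hi hK.le
  · rw [ctil_of_le hge]
    exact (Int.floor_le _).trans
      (zpow_floor_logb_le (by linarith) (div_pos (hK.trans_le hge) hK))

theorem dot_ctil_le (hγ : 0 < γ) (hc₀ : 0 ≤ c) (hc : c ≠ 0) {x : Fin n → ℝ} (hx : 0 ≤ x) :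
    dot (ctil n γ c) x ≤ dot c x / Kthr n γ c := by
  have hle : ctil n γ c ≤ (Kthr n γ c)⁻¹ • c := fun i ↦
    (ctil_le_div_Kthr hγ hc (hc₀ i)).trans_eq (div_eq_inv_mul _ _)
  simp only [dot_eq_dotProduct]
  calc
    ctil n γ c ⬝ᵥ x ≤ ((Kthr n γ c)⁻¹ • c) ⬝ᵥ x := dotProduct_le_dotProduct_of_nonneg_right hle hx
    _ = c ⬝ᵥ x / Kthr n γ c := by rw [smul_dotProduct, smul_eq_mul, div_eq_inv_mul]

end Rounding

theorem rounded_objective_valid_general (n : ℕ) (γ : ℝ) (hγ : 0 < γ)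
    (c : Fin n → ℝ) (hc₀ : ∀ i, 0 ≤ c i) (hc : c ≠ 0) :
    (∀ i, ctil n γ c i ∈ coefSet n γ) ∧
    ∀ (β : ℝ) (x : Fin n → ℝ), (∀ i, 0 ≤ x i) → dot c x ≤ β →
      dot (ctil n γ c) x ≤ β / Kthr n γ c :=
  ⟨ctil_mem_coefSet hγ hc, fun _ _ hx hβ ↦
    (dot_ctil_le hγ hc₀ hc hx).trans (div_le_div_of_nonneg_right hβ (Kthr_pos hγ hc).le)⟩

/-- for `n ≥ 1`, `0 < γ ≤ 1` and a nonzero `c ≥ 0`, (1) every coordinate of the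
rounded objective `c̃` belongs to the coefficient set `S`, and (2) for every `β` and every
`x ≥ 0` with `c·x ≤ β`, one has `c̃·x ≤ β/K` where `K = ‖c‖_∞·γ/(5n)`. -/
theorem rounded_objective_valid (n : ℕ) (hn : 1 ≤ n)
    (γ : ℝ) (hγ0 : 0 < γ) (hγ1 : γ ≤ 1)
    (c : Fin n → ℝ) (hc0 : ∀ i, 0 ≤ c i) (hcne : c ≠ 0) :
    (∀ i, ctil n γ c i ∈ coefSet n γ) ∧
    ∀ (β : ℝ) (x : Fin n → ℝ), (∀ i, 0 ≤ x i) → dot c x ≤ β →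
      dot (ctil n γ c) x ≤ β / Kthr n γ c :=
  rounded_objective_valid_general n γ hγ0 c hc0 hcne
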